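/- Let d ≥ 1 and let K : ℝ^d → ℝ be integrable, bounded, and continuous almost everywhere with ∫_{ℝ^d} K(x) dx ≠ 0. Then the set of all finite linear combinations x ↦ ∑_{i=1}^r A_i K((x − c_i)/L_i), with r ∈ ℕ, coefficients A_i ∈ ℝ, scales L_i > 0, and centers c_i ∈ ℝ^d, is dense in L^q(ℝ^d) for every 1 ≤ q < ∞. -/

import Mathlib

open MeasureTheory Real
open scoped ENNReal

namespace ParkSandberg

open Filter Topology

variable {E : Type*} [NormedAddCommGroup E] [InnerProductSpace ℝ E] [FiniteDimensional ℝ E]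
  [MeasurableSpace E] [BorelSpace E] {q : ℝ≥0∞} [Fact (1 ≤ q)]

/-- Translation on `L^q`. -/
noncomputable def tr (c : E) (f : Lp ℝ q (volume : Measure E)) : Lp ℝ q (volume : Measure E) :=
  Lp.compMeasurePreserving (fun x => x - c) (measurePreserving_sub_right volume c) f

lemma tr_continuous (hq : q ≠ ⊤) (f : Lp ℝ q (volume : Measure E)) :
    Continuous fun c => tr c f := by
  let g : C(E, C(E, E)) := (ContinuousMap.mk (fun a : E × E => a.2 - a.1) (by fun_prop)).curry
  exact (continuous_const (y := f)).compMeasurePreservingLp (g := g) g.continuous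
    (fun c => measurePreserving_sub_right volume c) hq

lemma norm_tr (c : E) (f : Lp ℝ q (volume : Measure E)) : ‖tr c f‖ = ‖f‖ :=
  Lp.norm_compMeasurePreserving _ _

lemma tr_zero (f : Lp ℝ q (volume : Measure E)) : tr 0 f = f := by
  apply Lp.ext
  refine (Lp.coeFn_compMeasurePreserving _ _).trans ?_
  filter_upwards with x
  simp

lemma tr_toLp (c : E) {g : E → ℝ} (hg : MemLp g q (volume : Measure E)) :
    tr c (hg.toLp g) =ᵐ[volume] fun x => g (x - c) := by
  refine (Lp.coeFn_compMeasurePreserving _ _).trans ?_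
  exact (measurePreserving_sub_right volume c).quasiMeasurePreserving.ae_eq_comp hg.coeFn_toLp

lemma integrable_smul_tr (hq : q ≠ ⊤) {f : E → ℝ} (hf : Integrable f)
    (g : Lp ℝ q (volume : Measure E)) (a : ℝ) :
    Integrable fun c => f c • tr (a • c) g := by
  refine (hf.norm.mul_const ‖g‖).mono' ?_ ?_
  · exact hf.aestronglyMeasurable.smul
      ((tr_continuous hq g).comp (continuous_const_smul a)).aestronglyMeasurable
  · filter_upwards with c
    rw [norm_smul, norm_tr]

lemma setIntegral_conv (hq : q ≠ ⊤) {f g : E → ℝ} (hf : Integrable f) (hg : Integrable g)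
    (hgq : MemLp g q (volume : Measure E)) {s : Set E} (hs : MeasurableSet s)
    (hμs : volume s ≠ ⊤) :
    ∫ x in s, (∫ c, f c • tr c (hgq.toLp g) : Lp ℝ q (volume : Measure E)) x =
      ∫ x in s, ∫ c, f c * g (x - c) := by
  let B : ℝ →L[ℝ] ℝ →L[ℝ] ℝ := ContinuousLinearMap.mul ℝ ℝ
  let p := ENNReal.conjExponent q
  have : ENNReal.HolderConjugate p q :=
    (inferInstance : ENNReal.HolderConjugate q (ENNReal.conjExponent q)).symm
  have : Fact (1 ≤ p) := ⟨ENNReal.HolderConjugate.one_le p q⟩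
  let ψ : Lp ℝ q (volume : Measure E) →L[ℝ] ℝ :=
    B.lpPairing volume p q (indicatorConstLp p hs hμs (1 : ℝ))
  have hψ : ∀ h : Lp ℝ q (volume : Measure E), ψ h = ∫ x in s, h x := by
    intro h
    rw [← integral_indicator hs]
    refine (B.lpPairing_eq_integral _ _).trans (integral_congr_ae ?_)
    filter_upwards [indicatorConstLp_coeFn (p := p) (hs := hs) (hμs := hμs) (c := (1:ℝ))] with x hx
    rw [hx]
    by_cases hxs : x ∈ s <;> simp [B, hxs]
  have hint : Integrable fun c => f c • tr c (hgq.toLp g) := by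
    simpa using integrable_smul_tr hq hf (hgq.toLp g) 1
  rw [← hψ, ← ψ.integral_comp_comm hint]
  have h1 : Integrable (fun z : E × E => f z.2 * g (z.1 - z.2))
      ((volume.restrict s).prod volume) := by
    have := hf.convolution_integrand B hg
    have h2 := this.restrict (s := s ×ˢ Set.univ)
    rw [← Measure.prod_restrict, Measure.restrict_univ] at h2
    exact h2
  rw [integral_integral_swap h1]
  congr 1
  ext c
  rw [map_smul, hψ, smul_eq_mul, integral_const_mul]
  congr 1
  exact integral_congr_ae (ae_restrict_of_ae (tr_toLp c hgq))

lemma conv_comm (hq : q ≠ ⊤) {f g : E → ℝ} (hf : Integrable f) (hg : Integrable g)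
    (hfq : MemLp f q (volume : Measure E)) (hgq : MemLp g q (volume : Measure E)) :
    (∫ c, f c • tr c (hgq.toLp g) : Lp ℝ q (volume : Measure E)) =
      ∫ c, g c • tr c (hfq.toLp f) := by
  have hq0 : q ≠ 0 := (one_pos.trans_le (Fact.out : 1 ≤ q)).ne'
  apply Lp.ext
  have hint : ∀ h : Lp ℝ q (volume : Measure E), ∀ s, MeasurableSet s → volume s < ⊤ →
      IntegrableOn h s := by
    intro h s _ hs
    have : IsFiniteMeasure ((volume : Measure E).restrict s) := ⟨by simpa using hs⟩
    exact ((Lp.memLp h).restrict s).integrable Fact.out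
  refine Lp.ae_eq_of_forall_setIntegral_eq _ _ hq0 hq (hint _) (hint _) ?_
  intro s hs hμs
  rw [setIntegral_conv hq hf hg hgq hs hμs.ne, setIntegral_conv hq hg hf hfq hs hμs.ne]
  congr 1
  ext x
  rw [← integral_sub_left_eq_self _ volume x]
  simp [mul_comm]

lemma integral_mem {F X : Type*} [NormedAddCommGroup F] [NormedSpace ℝ F] [CompleteSpace F]
    [MeasurableSpace X] {μ : Measure X} (M : Submodule ℝ F) (hM : IsClosed (M : Set F))
    {φ : X → F} (hφ : ∀ x, φ x ∈ M) : ∫ x, φ x ∂μ ∈ M := by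
  by_cases hi : Integrable φ μ
  · have : IsClosed (M : Set F) := hM
    rw [← Submodule.Quotient.mk_eq_zero]
    have h := (M.mkQL).integral_comp_comm hi
    have h0 : ∀ x, M.mkQL (φ x) = 0 := fun x => (Submodule.Quotient.mk_eq_zero M).2 (hφ x)
    simp only [h0, integral_zero] at h
    exact h.symm
  · rw [integral_undef hi]; exact M.zero_mem

lemma memLp_of_bdd (hq : q ≠ ⊤) {f : E → ℝ} (hf : Integrable f) {C : ℝ} (hC : ∀ x, |f x| ≤ C) :
    MemLp f q (volume : Measure E) := by
  have h1 : 1 ≤ q.toReal := by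
    have := (ENNReal.toReal_le_toReal ENNReal.one_ne_top hq).2 (Fact.out : 1 ≤ q)
    simpa using this
  have hq0 : q ≠ 0 := (one_pos.trans_le (Fact.out : 1 ≤ q)).ne'
  rw [← integrable_norm_rpow_iff hf.aestronglyMeasurable hq0 hq]
  refine (hf.norm.const_mul (C ^ (q.toReal - 1))).mono' ?_ ?_
  · exact (hf.aestronglyMeasurable.norm.aemeasurable.pow_const _).aestronglyMeasurable
  · filter_upwards with x
    have hx : 0 ≤ ‖f x‖ := norm_nonneg _
    rw [Real.norm_of_nonneg (Real.rpow_nonneg hx _)]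
    calc ‖f x‖ ^ q.toReal = ‖f x‖ ^ (q.toReal - 1) * ‖f x‖ ^ (1 : ℝ) := by
          rw [← Real.rpow_add_of_nonneg hx (by linarith) zero_le_one]; simp
      _ ≤ C ^ (q.toReal - 1) * ‖f x‖ := by
          rw [Real.rpow_one]
          gcongr
          exact hC x

lemma mem_closed (hq : q ≠ ⊤) {K : E → ℝ} (hK : Integrable K) (hK0 : ∫ x, K x ≠ 0)
    (hKq : ∀ L : ℝ, 0 < L → MemLp (fun x => K (L⁻¹ • x)) q (volume : Measure E))
    (M : Submodule ℝ (Lp ℝ q (volume : Measure E))) (hM : IsClosed (M : Set (Lp ℝ q (volume : Measure E))))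
    (hKM : ∀ L (hL : 0 < L) (c : E), tr c ((hKq L hL).toLp _) ∈ M)
    {g : E → ℝ} (hg : Integrable g) (hgq : MemLp g q (volume : Measure E)) :
    hgq.toLp g ∈ M := by
  have key : ∀ L : ℝ, 0 < L → ∫ u, K u • tr (L • u) (hgq.toLp g) ∈ M := by
    intro L hL
    have h1 := Measure.integral_comp_inv_smul_of_nonneg (volume : Measure E)
      (fun u => K u • tr (L • u) (hgq.toLp g)) hL.le
    simp only [smul_inv_smul₀ hL.ne'] at h1
    have hKL : Integrable (fun x => K (L⁻¹ • x)) := hK.comp_smul (inv_ne_zero hL.ne')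
    rw [conv_comm hq hKL hg (hKq L hL) hgq] at h1
    have h2 : L ^ Module.finrank ℝ E • ∫ u, K u • tr (L • u) (hgq.toLp g) ∈ M := by
      rw [← h1]
      exact integral_mem M hM fun c => M.smul_mem _ (hKM L hL c)
    exact (M.smul_mem_iff (pow_pos hL _).ne').1 h2
  have lim : Tendsto (fun L : ℝ => ∫ u, K u • tr (L • u) (hgq.toLp g)) (𝓝[>] 0)
      (𝓝 (∫ u, K u • hgq.toLp g)) := by
    refine tendsto_integral_filter_of_dominated_convergence (fun u => ‖K u‖ * ‖hgq.toLp g‖)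
      ?_ ?_ (hK.norm.mul_const _) ?_
    · exact Eventually.of_forall fun L => (integrable_smul_tr hq hK _ L).aestronglyMeasurable
    · refine Eventually.of_forall fun L => Eventually.of_forall fun u => ?_
      rw [norm_smul, norm_tr]
    · refine Eventually.of_forall fun u => Tendsto.const_smul ?_ _
      have hc : Continuous fun L : ℝ => tr (L • u) (hgq.toLp g) :=
        (tr_continuous hq _).comp (by fun_prop)
      have := hc.tendsto 0
      rw [zero_smul, tr_zero] at this
      exact this.mono_left nhdsWithin_le_nhds
  rw [integral_smul_const] at lim
  have := hM.mem_of_tendsto lim (by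
    filter_upwards [self_mem_nhdsWithin] with L hL using key L hL)
  exact (M.smul_mem_iff hK0).1 this

end ParkSandberg

open ParkSandberg in
/-- Park–Sandberg universal approximation theorem: if `K : ℝ^d → ℝ` is integrable,
bounded, continuous almost everywhere and has nonzero integral, then finite linear
combinations of translated and dilated copies of `K` are dense in `L^q(ℝ^d)`
for all `1 ≤ q < ∞`. -/
theorem park_sandberg_universal_approximation
    (d : ℕ) (hd : 1 ≤ d)
    (K : EuclideanSpace ℝ (Fin d) → ℝ)
    (hK_int : Integrable K)
    (hK_bdd : ∃ C : ℝ, ∀ x, |K x| ≤ C)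
    (hK_cont : ∀ᵐ x ∂(volume : Measure (EuclideanSpace ℝ (Fin d))), ContinuousAt K x)
    (hK_nonzero : (∫ x, K x) ≠ 0)
    (q : ℝ≥0∞) [hq1 : Fact (1 ≤ q)] (hq2 : q ≠ ⊤) :
    Dense {f : Lp ℝ q (volume : Measure (EuclideanSpace ℝ (Fin d))) |
      ∃ (r : ℕ) (A : Fin r → ℝ) (L : Fin r → ℝ) (c : Fin r → EuclideanSpace ℝ (Fin d)),
        (∀ i, 0 < L i) ∧
        (⇑f) =ᵐ[volume] fun x => ∑ i, A i * K ((L i)⁻¹ • (x - c i))} := by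
  obtain ⟨C, hC⟩ := hK_bdd
  have hKq : ∀ L : ℝ, 0 < L → MemLp (fun x => K (L⁻¹ • x)) q
      (volume : Measure (EuclideanSpace ℝ (Fin d))) := fun L hL =>
    memLp_of_bdd hq2 (hK_int.comp_smul (inv_ne_zero hL.ne')) (fun x => hC _)
  let S : Set (Lp ℝ q (volume : Measure (EuclideanSpace ℝ (Fin d)))) :=
    {f | ∃ (L : ℝ) (c : EuclideanSpace ℝ (Fin d)), 0 < L ∧
      (⇑f) =ᵐ[volume] fun x => K (L⁻¹ • (x - c))}
  let M := (Submodule.span ℝ S).topologicalClosure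
  have hM : IsClosed (M : Set (Lp ℝ q (volume : Measure (EuclideanSpace ℝ (Fin d))))) :=
    Submodule.isClosed_topologicalClosure _
  have hall : ∀ f, f ∈ M := by
    intro f
    refine Lp.induction hq2 (fun f => f ∈ M) ?_ ?_ hM f
    · intro a s hs hμs
      rw [Lp.simpleFunc.coe_indicatorConst]
      refine mem_closed hq2 hK_int hK_nonzero hKq M hM ?_ (g := s.indicator fun _ => a) ?_
        (memLp_indicator_const q hs a (Or.inr hμs.ne))
      · intro L hL c
        exact Submodule.le_topologicalClosure _
          (Submodule.subset_span ⟨L, c, hL, tr_toLp c (hKq L hL)⟩)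
      · exact (integrable_indicator_iff hs).2 (integrableOn_const hμs.ne)
    · intro f g hf hg _ h1 h2
      exact M.add_mem h1 h2
  intro f
  refine closure_mono ?_ (hall f)
  intro h hh
  obtain ⟨n, A, g, rfl⟩ := Submodule.mem_span_set'.1 hh
  choose L c hL hg using fun i => (g i).2
  refine ⟨n, A, L, c, hL, ?_⟩
  refine (Lp.coeFn_fun_finsetSum _ _).trans ?_
  have h1 : ∀ᵐ x ∂(volume : Measure (EuclideanSpace ℝ (Fin d))), ∀ i,
      (A i • (g i : Lp ℝ q (volume : Measure (EuclideanSpace ℝ (Fin d))))) x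
        = A i * K ((L i)⁻¹ • (x - c i)) := by
    rw [ae_all_iff]
    intro i
    filter_upwards [Lp.coeFn_smul (A i) (g i).1, hg i] with x h1 h2
    rw [h1, Pi.smul_apply, h2, smul_eq_mul]
  filter_upwards [h1] with x hx
  exact Finset.sum_congr rfl fun i _ => hx i
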